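/- arXiv:1907.04753 — 2 statements merged into one kernel-verified Lean document; each statement's English description precedes it below -/
import Mathlib

section
/- Let χ be a quadratic Dirichlet character modulo q induced by the primitive character χ* of conductor q₀. Then for every a ∈ A_q, |G(χ, a)| ≤ √q₀ / φ(q). -/
open scoped BigOperators

/-- `A_q = {1 ≤ a ≤ q : gcd(a, q) = 1}`. -/
def Aq (q : ℕ) : Finset ℕ := (Finset.Icc 1 q).filter (fun a => Nat.Coprime a q)

/-- The normalized Gauss sum `G(χ, n) = (1/φ(q)) Σ_{r ∈ A_q} χ(r) e^{2πi r n/q}`. -/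
noncomputable def gaussG (q : ℕ) (χ : DirichletCharacter ℂ q) (n : ℤ) : ℂ :=
  ((q.totient : ℂ))⁻¹ *
    ∑ r ∈ Aq q, χ (r : ZMod q) * Complex.exp (2 * Real.pi * Complex.I * r * n / q)

/-!
As `a` is a unit mod `q`, `|G(χ, a)| = |G(χ, 1)|`, where `φ(q) G(χ, 1) = ∑ χ(x) e(x / q)`.
Let `N` be the conductor of `χ`, write `q = k * N`, and let `χ₀` be the primitive character mod `N`
inducing `χ`. Detecting coprimality to `k` with the Möbius function gives
`∑ χ(x) e(x / q) = ∑_{d ∣ k} μ(d) ∑_{d ∣ x} χ₀(x) e(x / q)`. For `d < k` the inner sum vanishes: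
the translation `x ↦ x + d * N` preserves `χ₀(x)` and the condition `d ∣ x`, but multiplies
`e(x / q)` by a root of unity different from `1`. The term `d = k` is `μ(k) χ₀(k) τ(χ₀)`, where
the Gauss sum `τ(χ₀)` of the primitive character has absolute value `√N`.
-/

open AddChar ArithmeticFunction.Moebius DirichletCharacter

section PrimitiveCharacters

variable {N : ℕ} [NeZero N]

theorem gaussSum_mul_gaussSum_inv_eq_natCast {R : Type*} [CommRing R] [IsDomain R]
    {χ : DirichletCharacter R N} (hχ : χ.IsPrimitive)
    {e : AddChar (ZMod N) R} (he : e.IsPrimitive) :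
    gaussSum χ e * gaussSum χ⁻¹ e⁻¹ = N := by
  calc gaussSum χ e * gaussSum χ⁻¹ e⁻¹
      = ∑ b, gaussSum χ (e.mulShift b) * e (-b) := by
        simp only [gaussSum_mulShift_of_isPrimitive e hχ]
        rw [gaussSum, gaussSum, Finset.mul_sum]
        exact Finset.sum_congr rfl fun b _ => by rw [AddChar.inv_apply]; ring
    _ = ∑ b, ∑ a, χ a * e (b * (a - 1)) := by
        simp only [gaussSum, Finset.sum_mul]
        refine Finset.sum_congr rfl fun b _ => Finset.sum_congr rfl fun a _ => ?_
        rw [mulShift_apply, mul_assoc, ← map_add_eq_mul]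
        ring_nf
    _ = ∑ a, χ a * ∑ b, e (b * (a - 1)) := by
        rw [Finset.sum_comm]
        simp only [Finset.mul_sum]
    _ = N := by
        simp [sum_mulShift _ he, sub_eq_zero, ZMod.card]

theorem norm_gaussSum_of_isPrimitive {χ : DirichletCharacter ℂ N}
    (hχ : χ.IsPrimitive) {e : AddChar (ZMod N) ℂ} (he : e.IsPrimitive) : ‖gaussSum χ e‖ = √N := by
  have hsq : gaussSum χ e * star (gaussSum χ e) = N := by
    rw [star_gaussSum_eq, gaussSum_mul_gaussSum_inv_eq_natCast hχ he]
  rw [eq_comm, Real.sqrt_eq_iff_eq_sq (Nat.cast_nonneg N) (norm_nonneg _), sq]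
  simpa using (congrArg norm hsq).symm

end PrimitiveCharacters

section InducedCharacters

theorem sum_moebius_filter_dvd {k : ℕ} (hk : k ≠ 0) (n : ℕ) :
    ∑ d ∈ k.divisors with d ∣ n, μ d = if n.Coprime k then 1 else 0 := by
  have hfilter : k.divisors.filter (· ∣ n) = (n.gcd k).divisors := by
    ext d
    simp [Nat.dvd_gcd_iff, hk, and_comm]
  rw [hfilter, ← ArithmeticFunction.coe_mul_zeta_apply, ArithmeticFunction.moebius_mul_coe_zeta,
    ArithmeticFunction.one_apply]

theorem natCast_dvd_iff_dvd_val {q d : ℕ} [NeZero q] (hd : d ∣ q) (x : ZMod q) :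
    (d : ZMod q) ∣ x ↔ d ∣ x.val := by
  constructor
  · rintro ⟨y, rfl⟩
    rw [← ZMod.natCast_eq_zero_iff, ZMod.natCast_val, ZMod.cast_mul hd, ZMod.cast_natCast hd]
    simp
  · intro h
    simpa using Nat.cast_dvd_cast (α := ZMod q) h

theorem sum_mul_addChar_eq_zero_of_add_right {G R : Type*} [AddGroup G] [Fintype G] [Ring R]
    [NoZeroDivisors R] (ψ : AddChar G R) {h : G} (hψ : ψ h ≠ 1) {f : G → R}
    (hf : ∀ x, f (x + h) = f x) : ∑ x, f x * ψ x = 0 := by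
  have hshift : (∑ x, f x * ψ x) * ψ h = ∑ x, f x * ψ x := by
    rw [Finset.sum_mul, ← Equiv.sum_comp (Equiv.addRight h) fun x => f x * ψ x]
    simp only [Equiv.coe_addRight, hf, map_add_eq_mul, mul_assoc]
  exact eq_zero_of_mul_eq_self_right hψ hshift

theorem sum_ite_natCast_dvd_eq_sum {M : Type*} [AddCommMonoid M] {N k : ℕ} [NeZero N]
    [NeZero (k * N)] (f : ZMod (k * N) → M) :
    (∑ x, if (k : ZMod (k * N)) ∣ x then f x else 0) = ∑ s : ZMod N, f (k * s.val) := by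
  have hk : k ≠ 0 := left_ne_zero_of_mul (NeZero.ne (k * N))
  rw [← Finset.sum_filter]
  refine (Finset.sum_bij (fun s _ => (k * s.val : ZMod (k * N))) ?_ ?_ ?_ ?_).symm
  · intro s _
    simp
  · intro s _ t _ hst
    have hmod : k * s.val ≡ k * t.val [MOD k * N] :=
      (ZMod.natCast_eq_natCast_iff _ _ _).1 (by exact_mod_cast hst)
    simpa using (ZMod.natCast_eq_natCast_iff _ _ _).2 (hmod.mul_left_cancel' hk)
  · intro x hx
    obtain ⟨y, rfl⟩ := (Finset.mem_filter.1 hx).2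
    refine ⟨(y.val : ZMod N), Finset.mem_univ _, ?_⟩
    have hmod : k * (y.val % N) ≡ k * y.val [MOD k * N] := (Nat.mod_modEq _ _).mul_left' k
    simpa [ZMod.val_natCast, -ZMod.natCast_val, ZMod.natCast_zmod_val y] using
      (ZMod.natCast_eq_natCast_iff _ _ _).2 hmod
  · intro s _
    rfl

theorem changeLevel_apply_eq_ite {R : Type*} [CommMonoidWithZero R] {N q : ℕ} [NeZero q]
    (hN : N ∣ q) (χ : DirichletCharacter R N) (x : ZMod q) :
    changeLevel hN χ x = if x.val.Coprime (q / N) then χ x.cast else 0 := by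
  have hx : IsUnit x ↔ IsUnit (x.cast : ZMod N) ∧ x.val.Coprime (q / N) := by
    rw [← ZMod.natCast_val x, ZMod.isUnit_iff_coprime, ← Nat.coprime_mul_iff_right,
      Nat.mul_div_cancel' hN, ← ZMod.isUnit_iff_coprime, ZMod.natCast_zmod_val]
  by_cases hu : IsUnit x
  · rw [if_pos (hx.1 hu).2, ← hu.unit_spec, changeLevel_eq_cast_of_dvd]
  · rw [MulChar.map_nonunit _ hu]
    split_ifs with hc
    · exact (MulChar.map_nonunit _ fun h => hu (hx.2 ⟨h, hc⟩)).symm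
    · rfl

variable {R : Type*} [CommRing R]

theorem changeLevel_apply_eq_sum_moebius {N q : ℕ} [NeZero q] (hN : N ∣ q)
    (χ : DirichletCharacter R N) (x : ZMod q) :
    changeLevel hN χ x =
      ∑ d ∈ (q / N).divisors, (μ d : R) * if (d : ZMod q) ∣ x then χ x.cast else 0 := by
  have hk : q / N ≠ 0 := Nat.div_ne_zero_iff_of_dvd hN |>.2
    ⟨NeZero.ne q, ne_zero_of_dvd_ne_zero (NeZero.ne q) hN⟩
  calc changeLevel hN χ x
      = ((∑ d ∈ (q / N).divisors with d ∣ x.val, μ d : ℤ) : R) * χ x.cast := by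
        simp [sum_moebius_filter_dvd hk, changeLevel_apply_eq_ite]
    _ = ∑ d ∈ (q / N).divisors, (μ d : R) * if d ∣ x.val then χ x.cast else 0 := by
        simp [Finset.sum_filter, Finset.sum_mul]
    _ = _ := Finset.sum_congr rfl fun d hd => by
        simp only [natCast_dvd_iff_dvd_val
          ((Nat.dvd_of_mem_divisors hd).trans (Nat.div_dvd_of_dvd hN))]

variable [IsDomain R]

theorem sum_ite_natCast_dvd_mul_addChar_eq_zero {N q d : ℕ} [NeZero q] (hN : N ∣ q)
    (χ : DirichletCharacter R N) {e : AddChar (ZMod q) R} (he : e.IsPrimitive)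
    (hd : ¬ q ∣ d * N) :
    ∑ x : ZMod q, (if (d : ZMod q) ∣ x then χ x.cast else 0) * e x = 0 := by
  have hne : e (d * N : ℕ) ≠ 1 := by
    rwa [Ne, he.zmod_char_eq_one_iff, ZMod.natCast_eq_zero_iff]
  refine sum_mul_addChar_eq_zero_of_add_right e hne fun x => ?_
  have hcast : ((x + (d * N : ℕ) : ZMod q).cast : ZMod N) = x.cast := by
    rw [ZMod.cast_add hN, ZMod.cast_natCast hN]
    simp
  have hdvd : (d : ZMod q) ∣ x + (d * N : ℕ) ↔ (d : ZMod q) ∣ x :=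
    dvd_add_left (by simp)
  simp only [hcast, hdvd]

theorem gaussSum_changeLevel {N k : ℕ} [NeZero N] [NeZero (k * N)]
    (χ : DirichletCharacter R N) {e : AddChar (ZMod (k * N)) R} (he : e.IsPrimitive)
    {e' : AddChar (ZMod N) R} (he' : ∀ n : ℕ, e' n = e (k * n)) :
    gaussSum (changeLevel (Nat.dvd_mul_left N k) χ) e = μ k * χ k * gaussSum χ e' := by
  have hN : 0 < N := NeZero.pos N
  have hk : k ≠ 0 := left_ne_zero_of_mul (NeZero.ne (k * N))
  calc gaussSum (changeLevel (Nat.dvd_mul_left N k) χ) e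
      = ∑ d ∈ k.divisors, (μ d : R) *
          ∑ x : ZMod (k * N), (if (d : ZMod (k * N)) ∣ x then χ x.cast else 0) * e x := by
        simp only [gaussSum, changeLevel_apply_eq_sum_moebius, Nat.mul_div_cancel k hN,
          Finset.sum_mul, Finset.mul_sum, mul_assoc]
        exact Finset.sum_comm
    _ = μ k * ∑ x : ZMod (k * N), (if (k : ZMod (k * N)) ∣ x then χ x.cast else 0) * e x := by
        refine Finset.sum_eq_single_of_mem k (Nat.mem_divisors_self k hk) fun d hd hdk => ?_
        have hndvd : ¬ k * N ∣ d * N := fun h =>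
          hdk (Nat.dvd_antisymm (Nat.dvd_of_mem_divisors hd) (Nat.dvd_of_mul_dvd_mul_right hN h))
        rw [sum_ite_natCast_dvd_mul_addChar_eq_zero (Nat.dvd_mul_left N k) χ he hndvd, mul_zero]
    _ = μ k * ∑ s : ZMod N, χ (k * s) * e' s := by
        simp only [ite_mul, zero_mul, sum_ite_natCast_dvd_eq_sum (fun x => χ x.cast * e x)]
        congr! 3 with s
        · rw [← Nat.cast_mul, ZMod.cast_natCast (Nat.dvd_mul_left N k)]
          simp
        · rw [← he', ZMod.natCast_zmod_val]
    _ = μ k * χ k * gaussSum χ e' := by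
        simp only [map_mul, mul_assoc, gaussSum, Finset.mul_sum]

end InducedCharacters

section StandardAdditiveCharacter

theorem stdAddChar_natCast_mul {N k : ℕ} [NeZero N] [NeZero (k * N)] (n : ℕ) :
    ZMod.stdAddChar (N := k * N) (k * n) = ZMod.stdAddChar (N := N) n := by
  have hk : (k : ℂ) ≠ 0 := Nat.cast_ne_zero.2 (left_ne_zero_of_mul (NeZero.ne (k * N)))
  have hkN := ZMod.stdAddChar_coe (N := k * N) (k * n)
  have hN := ZMod.stdAddChar_coe (N := N) n
  push_cast at hkN hN
  rw [hkN, hN, mul_left_comm, mul_div_mul_left _ _ hk]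

theorem norm_gaussSum_changeLevel_le {N q : ℕ} [NeZero q] (hN : N ∣ q)
    {χ : DirichletCharacter ℂ N} (hχ : χ.IsPrimitive) :
    ‖gaussSum (changeLevel hN χ) ZMod.stdAddChar‖ ≤ √N := by
  obtain ⟨k, rfl⟩ := exists_eq_mul_left_of_dvd hN
  have : NeZero N := ⟨right_ne_zero_of_mul (NeZero.ne (k * N))⟩
  have hμ : ‖(μ k : ℂ)‖ ≤ 1 := by
    rw [Complex.norm_intCast]
    exact_mod_cast ArithmeticFunction.abs_moebius_le_one
  have hformula := gaussSum_changeLevel χ (ZMod.isPrimitive_stdAddChar (k * N))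
    fun n => (stdAddChar_natCast_mul n).symm
  rw [hformula, norm_mul, norm_mul, norm_gaussSum_of_isPrimitive hχ (ZMod.isPrimitive_stdAddChar N)]
  exact mul_le_of_le_one_left (Real.sqrt_nonneg _)
    (mul_le_one₀ hμ (norm_nonneg _) (χ.norm_le_one _))

variable {q : ℕ} [NeZero q] (χ : DirichletCharacter ℂ q)

theorem norm_gaussSum_stdAddChar_le_sqrt_conductor :
    ‖gaussSum χ ZMod.stdAddChar‖ ≤ √χ.conductor := by
  conv_lhs => rw [← χ.changeLevel_primitiveCharacter]
  exact norm_gaussSum_changeLevel_le χ.conductor_dvd_level χ.primitiveCharacter_isPrimitive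

theorem norm_gaussSum_mulShift (e : AddChar (ZMod q) ℂ) (u : (ZMod q)ˣ) :
    ‖gaussSum χ (e.mulShift u)‖ = ‖gaussSum χ e‖ := by
  rw [gaussSum_mulShift_eq, norm_mul, unit_norm_eq_one, one_mul]

theorem sum_Icc_natCast {M : Type*} [AddCommMonoid M] (f : ZMod q → M) :
    ∑ r ∈ Finset.Icc 1 q, f r = ∑ x, f x := by
  have hinj : Set.InjOn (Nat.cast : ℕ → ZMod q) (Finset.Icc 1 q) := by
    intro r hr s hs hrs
    rw [Finset.coe_Icc, Set.mem_Icc] at hr hs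
    exact ((ZMod.natCast_eq_natCast_iff _ _ _).1 hrs).eq_of_abs_lt (by rw [abs_lt]; omega)
  have himage : (Finset.Icc 1 q).image (Nat.cast : ℕ → ZMod q) = Finset.univ :=
    Finset.eq_univ_of_card _ (by simp [Finset.card_image_of_injOn hinj, ZMod.card])
  rw [← himage, Finset.sum_image hinj]

theorem gaussG_eq_gaussSum (n : ℤ) :
    gaussG q χ n = (q.totient : ℂ)⁻¹ * gaussSum χ (ZMod.stdAddChar.mulShift n) := by
  rw [gaussG, gaussSum, ← sum_Icc_natCast, Aq, Finset.sum_filter_of_ne]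
  · congr 1
    refine Finset.sum_congr rfl fun r _ => ?_
    have hstd := ZMod.stdAddChar_coe (N := q) (n * r)
    push_cast at hstd
    rw [mulShift_apply, hstd]
    ring_nf
  · intro r _ hr
    contrapose! hr
    rw [MulChar.map_nonunit _ (mt (ZMod.isUnit_iff_coprime _ _).1 hr), zero_mul]

end StandardAdditiveCharacter

theorem stmt_8_general {q : ℕ} [NeZero q] (χ : DirichletCharacter ℂ q) {a : ℤ}
    (ha : IsCoprime a q) : ‖gaussG q χ a‖ ≤ √χ.conductor / q.totient := by
  rw [gaussG_eq_gaussSum, ← ZMod.coe_unitOfIsCoprime a ha, norm_mul, norm_inv,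
    Complex.norm_natCast, inv_mul_eq_div, norm_gaussSum_mulShift]
  gcongr
  exact norm_gaussSum_stdAddChar_le_sqrt_conductor χ

/-- If `χ` is a quadratic Dirichlet character mod `q` induced by a primitive character of
conductor `q₀`, then `|G(χ, a)| ≤ √q₀ / φ(q)` for every `a ∈ A_q`. -/
theorem stmt_8 (q q₀ : ℕ) (hq : 0 < q) (hdvd : q₀ ∣ q)
    (χ : DirichletCharacter ℂ q) (χstar : DirichletCharacter ℂ q₀)
    (hprim : χstar.IsPrimitive) (hind : χ = DirichletCharacter.changeLevel hdvd χstar)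
    (hquad : ∀ n : ZMod q, χ n = -1 ∨ χ n = 0 ∨ χ n = 1) (hneg : ∃ n : ZMod q, χ n = -1)
    (a : ℕ) (ha : a ∈ Aq q) :
    ‖gaussG q χ (a : ℤ)‖ ≤ Real.sqrt q₀ / q.totient := by
  have : NeZero q := ⟨hq.ne'⟩
  have hcond : χ.conductor = q₀ := by rw [hind, conductor_changeLevel, (isPrimitive_def _).1 hprim]
  exact hcond ▸ stmt_8_general χ (Nat.isCoprime_iff_coprime.2 (Finset.mem_filter.1 ha).2)
end

section
/- There is a constant C > 0 (depending only on η) such that for every s ∈ ℕ, every integer Q with 1 ≤ Q ≤ 2^{2s}, every r ∈ {1, …, Q}, every β ∈ [1/2, 1], every finitely supported f : ℤ → ℂ, and every λ > 0, one has λ · #{x ∈ ℤ : sup_{n ∈ ℕ₀} |M_{2^n}^β(ℱ⁻¹(η_s f̂))(Qx + r)| > λ} ≤ C Σ_{x ∈ ℤ} |ℱ⁻¹(η_s f̂)(Qx + r)|. -/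
open scoped BigOperators

/-- `η` is smooth, `0 ≤ η ≤ 1`, `η = 1` on `[−1/4, 1/4]`, `η = 0` off `(−1/2, 1/2)`,
and `η` is a convolution of two smooth functions supported in `(−1/2, 1/2)`. -/
def IsEta (η : ℝ → ℝ) : Prop :=
  ContDiff ℝ (⊤ : ℕ∞) η ∧ (∀ ξ, 0 ≤ η ξ ∧ η ξ ≤ 1) ∧ (∀ ξ : ℝ, |ξ| ≤ 1 / 4 → η ξ = 1) ∧
    (∀ ξ : ℝ, 1 / 2 ≤ |ξ| → η ξ = 0) ∧
    ∃ g₁ g₂ : ℝ → ℝ, ContDiff ℝ (⊤ : ℕ∞) g₁ ∧ ContDiff ℝ (⊤ : ℕ∞) g₂ ∧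
      (∀ x : ℝ, x ∉ Set.Ioo (-(1 / 2) : ℝ) (1 / 2) → g₁ x = 0) ∧
      (∀ x : ℝ, x ∉ Set.Ioo (-(1 / 2) : ℝ) (1 / 2) → g₂ x = 0) ∧
      ∀ x : ℝ, η x = ∫ y : ℝ, g₁ y * g₂ (x - y)

/-- `η_s(ξ) = η(2^{4s} ξ)`, regarded as a 1-periodic function (periodization). -/
noncomputable def etaPer (η : ℝ → ℝ) (s : ℕ) (ξ : ℝ) : ℝ :=
  ∑' k : ℤ, η (2 ^ (4 * s) * (ξ - k))

/-- The Fourier transform `f̂(ξ) = Σ_{n ∈ ℤ} f(n) e^{−2πi ξ n}` of a (finitely supported)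
function on `ℤ`. -/
noncomputable def fhat (f : ℤ → ℂ) (ξ : ℝ) : ℂ :=
  ∑' n : ℤ, f n * Complex.exp (-(2 * Real.pi * Complex.I * ξ * n))

/-- The inverse Fourier transform `ℱ⁻¹g(x) = ∫₀¹ g(ξ) e^{2πi ξ x} dξ`, `x ∈ ℤ`. -/
noncomputable def FinvInt (g : ℝ → ℂ) (x : ℤ) : ℂ :=
  ∫ ξ in (0 : ℝ)..1, g ξ * Complex.exp (2 * Real.pi * Complex.I * ξ * x)

/-- The discrete operator `M_N^β f(x) = (1/N) Σ_{n=1}^N ((n^β − (n−1)^β)/β) f(x + n)`. -/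
noncomputable def Mop (β : ℝ) (N : ℕ) (g : ℤ → ℂ) (x : ℤ) : ℂ :=
  ((N : ℂ))⁻¹ * ∑ n ∈ Finset.Icc 1 N,
    (((((n : ℝ) ^ β - ((n : ℝ) - 1) ^ β) / β) : ℝ) : ℂ) * g (x + n)

/-!
A Poisson summation argument recovers `F = ℱ⁻¹(η_s f̂)` from its samples on `Qℤ + r`: since
`2Q ≤ 2^{4s}`, the frequencies of `t ↦ F(Qt + r)` lie in `[-1/4, 1/4]`, so this function is the
convolution of its values at the integers with a Schwartz function `κ` independent of `η`, `s`,
`Q` and `r`. Hence on each block `Qx + r, …, Qx + r + Q - 1` the size of `F` is at most `H(x)`,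
where `H` is the convolution of `|F(Q · + r)|` with a fixed summable sequence. As the weights of
`M_N^β` are at most `1/β`, averages of `F` of any length are dominated by one-sided
Hardy–Littlewood averages of `H`, and a greedy covering argument on `ℤ` gives their weak type
`(1, 1)` bound.
-/

open MeasureTheory
open scoped ENNReal FourierTransform SchwartzMap

/-! ### One-sided averages and coverings -/

theorem tsum_tsum_sub_mul {G : Type*} [AddGroup G] (k a : G → ℝ≥0∞) :
    ∑' x, ∑' y, k (x - y) * a y = (∑' x, k x) * ∑' y, a y := by
  rw [ENNReal.tsum_comm, ← ENNReal.tsum_mul_left]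
  refine tsum_congr fun y => ?_
  rw [ENNReal.tsum_mul_right]
  exact congrArg (· * a y) ((Equiv.subRight y).tsum_eq k)

-- Greedy covering: the interval of the least point of `S` pays for every point of `S` inside it.
theorem mul_card_le_tsum_of_le_sum_range (H : ℤ → ℝ≥0∞) (c : ℝ≥0∞) (S : Finset ℤ) (a : ℤ)
    (ha : ∀ x ∈ S, a ≤ x)
    (hS : ∀ x ∈ S, ∃ K : ℕ, 0 < K ∧ c * K ≤ ∑ m ∈ Finset.range K, H (x + m)) :
    c * S.card ≤ ∑' n : ℕ, H (a + n) := by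
  induction S using Finset.strongInduction generalizing a with
  | H S ih =>
    rcases S.eq_empty_or_nonempty with rfl | hne
    · simp
    obtain ⟨K, hK, hsum⟩ := hS _ (S.min'_mem hne)
    set x := S.min' hne
    have hfilter : S.filter (x + K ≤ ·) ⊂ S :=
      Finset.filter_ssubset.mpr ⟨x, S.min'_mem hne, by omega⟩
    have htail := ih _ hfilter (x + K) (fun y hy => (Finset.mem_filter.mp hy).2)
      fun y hy => hS y (Finset.mem_filter.mp hy).1
    have hcard : S.card ≤ K + (S.filter (x + K ≤ ·)).card := by
      have hhead : S.filter (¬ x + K ≤ ·) ⊆ Finset.Ico x (x + K) := fun y hy => by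
        have hy := Finset.mem_filter.mp hy
        exact Finset.mem_Ico.mpr ⟨S.min'_le y hy.1, not_le.mp hy.2⟩
      have := Finset.card_le_card hhead
      rw [Int.card_Ico] at this
      have := S.card_filter_add_card_filter_not (x + (K : ℤ) ≤ ·)
      omega
    obtain ⟨d, hd⟩ := Int.eq_ofNat_of_zero_le (sub_nonneg.mpr (ha x (S.min'_mem hne)))
    calc c * S.card ≤ c * (K + (S.filter (x + K ≤ ·)).card : ℕ) := by gcongr
      _ = c * K + c * (S.filter (x + K ≤ ·)).card := by push_cast; ring
      _ ≤ ∑ m ∈ Finset.range K, H (x + m) + ∑' n : ℕ, H (x + K + n) := add_le_add hsum htail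
      _ = ∑' n : ℕ, H (x + n) := by
        rw [← ENNReal.summable.sum_add_tsum_nat_add' (f := fun n : ℕ => H (x + n)) (k := K)]
        simp only [Nat.cast_add, add_assoc, add_comm (K : ℤ)]
      _ = ∑' n : ℕ, H (a + (d + n : ℕ)) := by
        simp only [Nat.cast_add, ← add_assoc, ← hd, add_sub_cancel]
      _ ≤ ∑' n : ℕ, H (a + n) :=
        ENNReal.tsum_comp_le_tsum_of_injective (add_right_injective d) fun n : ℕ => H (a + n)

-- The factor `min N Q`, rather than `Q`, is what controls averages shorter than one block.
theorem sum_Icc_le_min_mul_sum_range (u : ℕ → ℝ≥0∞) (H : ℕ → ℝ≥0∞) {Q : ℕ} (hQ : 0 < Q)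
    (huH : ∀ n, u n ≤ H (n / Q)) (N : ℕ) :
    ∑ n ∈ Finset.Icc 1 N, u n ≤ (min N Q : ℕ) * ∑ m ∈ Finset.range (N / Q + 1), H m := by
  have hmaps : ∀ n ∈ Finset.Icc 1 N, n / Q ∈ Finset.range (N / Q + 1) := fun n hn =>
    Finset.mem_range_succ_iff.mpr (Nat.div_le_div_right (Finset.mem_Icc.mp hn).2)
  calc ∑ n ∈ Finset.Icc 1 N, u n ≤ ∑ n ∈ Finset.Icc 1 N, H (n / Q) :=
        Finset.sum_le_sum fun n _ => huH n
    _ = ∑ m ∈ Finset.range (N / Q + 1), ((Finset.Icc 1 N).filter (· / Q = m)).card * H m := by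
        simp only [← Finset.sum_fiberwise_of_maps_to' hmaps, Finset.sum_const, nsmul_eq_mul]
    _ ≤ ∑ m ∈ Finset.range (N / Q + 1), (min N Q : ℕ) * H m := by
        gcongr with m
        refine le_min ((Finset.card_filter_le _ _).trans (by simp)) ?_
        have hfiber : (Finset.Icc 1 N).filter (· / Q = m) ⊆ Finset.Ico (m * Q) (m * Q + Q) := by
          intro n hn
          have hn := (Finset.mem_filter.mp hn).2
          rw [Nat.div_eq_iff hQ] at hn
          rw [Finset.mem_Ico]
          omega
        simpa using Finset.card_le_card hfiber
    _ = (min N Q : ℕ) * ∑ m ∈ Finset.range (N / Q + 1), H m := by rw [Finset.mul_sum]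

theorem mul_card_le_two_mul_tsum_of_block_le (u H : ℤ → ℝ≥0∞) {Q : ℕ} (hQ : 0 < Q)
    (huH : ∀ (x : ℤ) (j : ℕ), j < Q → u (Q * x + j) ≤ H x) (c : ℝ≥0∞) (S : Finset ℤ)
    (hS : ∀ x ∈ S, ∃ N : ℕ, 0 < N ∧ c * N ≤ ∑ n ∈ Finset.Icc 1 N, u (Q * x + n)) :
    c * S.card ≤ 2 * ∑' x, H x := by
  rcases S.eq_empty_or_nonempty with rfl | hne
  · simp
  rw [← ENNReal.tsum_mul_left]
  refine (mul_card_le_tsum_of_le_sum_range (fun x => 2 * H x) c S (S.min' hne)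
    (fun x hx => S.min'_le x hx) fun x hx => ?_).trans
    (ENNReal.tsum_comp_le_tsum_of_injective (fun m n h => by simpa using h) fun x => 2 * H x)
  obtain ⟨N, hN, hcN⟩ := hS x hx
  have hblock : ∀ n : ℕ, u (Q * x + n) ≤ H (x + (n / Q : ℕ)) := fun n => by
    have hn : (Q : ℤ) * x + n = Q * (x + (n / Q : ℕ)) + (n % Q : ℕ) := by
      push_cast
      linear_combination -Int.mul_ediv_add_emod n Q
    exact hn ▸ huH _ _ (Nat.mod_lt n hQ)
  have hlength : (N / Q + 1) * min N Q ≤ 2 * N := by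
    have := Nat.div_mul_le_self N Q
    have := Nat.mul_le_mul_left (N / Q) (min_le_right N Q)
    have := min_le_left N Q
    rw [add_mul]
    omega
  have hmin : ((min N Q : ℕ) : ℝ≥0∞) ≠ 0 := Nat.cast_ne_zero.mpr (lt_min hN hQ).ne'
  refine ⟨N / Q + 1, by positivity, ?_⟩
  rw [← Finset.mul_sum, ← ENNReal.mul_le_mul_iff_right hmin (ENNReal.natCast_ne_top _)]
  calc ((min N Q : ℕ) : ℝ≥0∞) * (c * (N / Q + 1 : ℕ)) = c * ((N / Q + 1) * min N Q : ℕ) := by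
        push_cast; ring
    _ ≤ c * (2 * N : ℕ) := by gcongr
    _ = 2 * (c * N) := by push_cast; ring
    _ ≤ 2 * ((min N Q : ℕ) * ∑ m ∈ Finset.range (N / Q + 1), H (x + m)) := by
        gcongr 2 * ?_
        exact hcN.trans
          (sum_Icc_le_min_mul_sum_range (fun n => u (Q * x + n)) (fun m => H (x + m)) hQ hblock N)
    _ = (min N Q : ℕ) * (2 * ∑ m ∈ Finset.range (N / Q + 1), H (x + m)) := by ring

theorem rpow_sub_rpow_sub_one_le_one {β x : ℝ} (hβ₀ : 0 ≤ β) (hβ₁ : β ≤ 1) (hx : 1 ≤ x) :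
    x ^ β - (x - 1) ^ β ≤ 1 := by
  have := Real.rpow_add_le_add_rpow (sub_nonneg.mpr hx) zero_le_one hβ₀ hβ₁
  rw [sub_add_cancel, Real.one_rpow] at this
  linarith

theorem mul_norm_Mop_le {β : ℝ} (hβ₀ : 0 < β) (hβ₁ : β ≤ 1) (N : ℕ) (g : ℤ → ℂ) (x : ℤ) :
    β * ‖Mop β N g x‖ * N ≤ ∑ n ∈ Finset.Icc 1 N, ‖g (x + n)‖ := by
  rcases N.eq_zero_or_pos with rfl | hN
  · simp
  have hweight : ∀ n ∈ Finset.Icc 1 N,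
      ‖((((n : ℝ) ^ β - ((n : ℝ) - 1) ^ β) / β : ℝ) : ℂ)‖ ≤ β⁻¹ := fun n hn => by
    have hn : (1 : ℝ) ≤ n := Nat.one_le_cast.mpr (Finset.mem_Icc.mp hn).1
    have hmono : ((n : ℝ) - 1) ^ β ≤ (n : ℝ) ^ β :=
      Real.rpow_le_rpow (sub_nonneg.mpr hn) (sub_one_lt _).le hβ₀.le
    rw [Complex.norm_real, Real.norm_of_nonneg (div_nonneg (sub_nonneg.mpr hmono) hβ₀.le),
      ← one_div]
    gcongr
    exact rpow_sub_rpow_sub_one_le_one hβ₀.le hβ₁ hn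
  have hterm : ‖∑ n ∈ Finset.Icc 1 N, ((((n : ℝ) ^ β - ((n : ℝ) - 1) ^ β) / β : ℝ) : ℂ) *
      g (x + n)‖ ≤ β⁻¹ * ∑ n ∈ Finset.Icc 1 N, ‖g (x + n)‖ := by
    rw [Finset.mul_sum]
    refine norm_sum_le_of_le _ fun n hn => ?_
    rw [norm_mul]
    gcongr
    exact hweight n hn
  rw [Mop, norm_mul, norm_inv, Complex.norm_natCast]
  rw [← div_eq_inv_mul, ← mul_div_assoc, div_mul_cancel₀ _ (by positivity)]
  exact (le_inv_mul_iff₀ hβ₀).mp hterm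

/-! ### Sampling of band-limited functions -/

theorem summable_int_inv_one_add_sq : Summable fun m : ℤ => (1 + (m : ℝ) ^ 2)⁻¹ := by
  refine Summable.of_norm_bounded_eventually
    (Real.summable_one_div_int_pow.mpr one_lt_two) ?_
  filter_upwards [(Set.finite_singleton (0 : ℤ)).compl_mem_cofinite] with m hm
  have hm : (m : ℝ) ≠ 0 := Int.cast_ne_zero.mpr hm
  rw [Real.norm_of_nonneg (by positivity), one_div]
  gcongr
  linarith

theorem exists_norm_le_mul_inv_one_add_sq {E : Type*} [NormedAddCommGroup E] [NormedSpace ℝ E]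
    (f : 𝓢(ℝ, E)) : ∃ D : ℝ, 0 < D ∧ ∀ u : ℝ, ‖f u‖ ≤ D * (1 + u ^ 2)⁻¹ := by
  obtain ⟨C₀, hC₀, h₀⟩ := f.decay 0 0
  obtain ⟨C₂, hC₂, h₂⟩ := f.decay 2 0
  refine ⟨C₀ + C₂, by positivity, fun u => ?_⟩
  have h₀ := h₀ u
  have h₂ := h₂ u
  simp only [norm_iteratedFDeriv_zero, pow_zero, one_mul, Real.norm_eq_abs, sq_abs] at h₀ h₂
  rw [← div_eq_mul_inv, le_div_iff₀ (by positivity)]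
  linarith

theorem exists_summable_majorant {E : Type*} [NormedAddCommGroup E] [NormedSpace ℝ E]
    (f : 𝓢(ℝ, E)) : ∃ k : ℤ → ℝ≥0∞, ∑' m, k m ≠ ∞ ∧
      ∀ (m : ℤ) (t : ℝ), 0 ≤ t → t ≤ 1 → ‖f (m + t)‖ₑ ≤ k m := by
  obtain ⟨D, hD, hfD⟩ := exists_norm_le_mul_inv_one_add_sq f
  refine ⟨fun m => ENNReal.ofReal (3 * D * (1 + (m : ℝ) ^ 2)⁻¹),
    (summable_int_inv_one_add_sq.mul_left _).tsum_ofReal_ne_top, fun m t ht₀ ht₁ => ?_⟩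
  rw [← ofReal_norm]
  refine ENNReal.ofReal_le_ofReal ((hfD _).trans ?_)
  rw [← div_eq_mul_inv, ← div_eq_mul_inv, div_le_div_iff₀ (by positivity) (by positivity)]
  have hshift : 1 + (m : ℝ) ^ 2 ≤ 3 * (1 + (m + t) ^ 2) := by
    nlinarith [sq_nonneg (2 * (m : ℝ) + 3 * t)]
  nlinarith

theorem summable_norm_sub_int {E : Type*} [NormedAddCommGroup E] [NormedSpace ℝ E]
    (f : 𝓢(ℝ, E)) (t : ℝ) : Summable fun m : ℤ => ‖f (t - m)‖ := by
  obtain ⟨k, hk, hfk⟩ := exists_summable_majorant f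
  rw [← tsum_enorm_ne_top_iff_summable_norm]
  refine ne_top_of_le_ne_top hk ?_
  rw [← (Equiv.subLeft ⌊t⌋).tsum_eq k]
  refine ENNReal.tsum_le_tsum fun m => ?_
  convert! hfk (⌊t⌋ - m) (Int.fract t) (Int.fract_nonneg t) (Int.fract_lt_one t).le using 3
  push_cast
  linear_combination (Int.floor_add_fract t).symm

theorem fourierInv_eq_integral_mul (Φ : ℝ → ℂ) (t : ℝ) : 𝓕⁻ Φ t = ∫ ξ, 𝐞 (ξ * t) * Φ ξ := by
  simp only [Real.fourierInv_eq, Circle.smul_def, smul_eq_mul, RCLike.inner_apply, conj_trivial,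
    mul_comm]

theorem tsum_mul_fourierInv {ι : Type*} [Countable ι] {Φ : ℝ → ℂ} (hΦ : Integrable Φ) {a : ι → ℂ}
    (ha : Summable fun i => ‖a i‖) (τ : ι → ℝ) :
    ∑' i, a i * 𝓕⁻ Φ (τ i) = ∫ ξ, (∑' i, a i * 𝐞 (ξ * τ i)) * Φ ξ := by
  have hint : ∀ i, Integrable fun ξ => a i * (𝐞 (ξ * τ i) * Φ ξ) := fun i => by
    have := (Real.fourierIntegral_convergent_iff (-τ i)).mpr hΦ
    simpa [Circle.smul_def, mul_comm] using this.const_mul (a i)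
  have hnorm : ∀ i ξ, ‖a i * (𝐞 (ξ * τ i) * Φ ξ)‖ = ‖a i‖ * ‖Φ ξ‖ := fun i ξ => by
    rw [norm_mul, norm_mul, Circle.norm_coe, one_mul]
  have hsum : Summable fun i => ∫ ξ, ‖a i * (𝐞 (ξ * τ i) * Φ ξ)‖ := by
    simpa only [hnorm, integral_const_mul] using ha.mul_right _
  simp only [fourierInv_eq_integral_mul, ← integral_const_mul, ← tsum_mul_right, mul_assoc,
    integral_tsum_of_summable_integral_norm hint hsum]

theorem fourier_fourierChar_mul (ψ : ℝ → ℂ) (t y : ℝ) :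
    𝓕 (fun ξ => 𝐞 (ξ * t) * ψ ξ) y = 𝓕⁻ ψ (t - y) := by
  rw [Real.fourier_real_eq, fourierInv_eq_integral_mul]
  refine integral_congr_ae (.of_forall fun ξ => ?_)
  simp only
  rw [Circle.smul_def, smul_eq_mul, ← mul_assoc, ← Circle.coe_mul, ← AddChar.map_add_eq_mul]
  ring_nf

theorem tsum_fourierInv_mul_fourierChar (ψ : 𝓢(ℝ, ℂ)) (ω t : ℝ) :
    ∑' y : ℤ, 𝓕⁻ (ψ : ℝ → ℂ) (t - y) * 𝐞 (ω * y) =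
      ∑' n : ℤ, 𝐞 ((ω + n) * t) * ψ (ω + n) := by
  have hcont : Continuous fun ξ : ℝ => (𝐞 (ξ * t) : ℂ) * ψ ξ := by fun_prop
  have hdecay : (fun ξ : ℝ => (𝐞 (ξ * t) : ℂ) * ψ ξ) =O[Filter.cocompact ℝ] (|·| ^ (-2 : ℝ)) := by
    refine .trans (.of_bound' (.of_forall fun ξ => ?_)) (ψ.isBigO_cocompact_rpow (-2))
    rw [norm_mul, Circle.norm_coe, one_mul]
  have hsum : Summable fun n : ℤ => 𝓕 (fun ξ : ℝ => (𝐞 (ξ * t) : ℂ) * ψ ξ) n := by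
    simpa only [fourier_fourierChar_mul, SchwartzMap.fourierInv_coe] using
      (summable_norm_sub_int (𝓕⁻ ψ : 𝓢(ℝ, ℂ)) t).of_norm
  refine .trans (tsum_congr fun y => ?_) (Real.tsum_eq_tsum_fourier_of_rpow_decay_of_summable
    hcont one_lt_two hdecay hsum ω).symm
  rw [fourier_fourierChar_mul, fourier_coe_apply, Real.fourierChar_apply]
  congr 2
  push_cast
  ring

theorem exists_schwartzMap_cutoff : ∃ ψ : 𝓢(ℝ, ℂ),
    (∀ ξ : ℝ, |ξ| ≤ 1 / 4 → ψ ξ = 1) ∧ ∀ ξ : ℝ, 1 / 2 ≤ |ξ| → ψ ξ = 0 := by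
  let φ : ContDiffBump (0 : ℝ) := ⟨1 / 4, 1 / 2, by norm_num, by norm_num⟩
  refine ⟨(φ.hasCompactSupport.comp_left Complex.ofReal_zero).toSchwartzMap
    (Complex.ofRealCLM.contDiff.comp φ.contDiff), fun ξ hξ => ?_, fun ξ hξ => ?_⟩
  · exact congrArg Complex.ofReal (φ.one_of_mem_closedBall (by simpa [φ] using hξ))
  · exact congrArg Complex.ofReal (φ.zero_of_le_dist (by simpa [φ] using hξ))

-- By Poisson summation the left side is `∑ n, 𝐞 ((ω + n) * t) * ψ (ω + n)` with `ψ` a cutoff that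
-- leaves only `n = 0`.
theorem exists_sampling_kernel : ∃ κ : 𝓢(ℝ, ℂ), ∀ ω t : ℝ, |ω| ≤ 1 / 4 →
    ∑' y : ℤ, κ (t - y) * 𝐞 (ω * y) = 𝐞 (ω * t) := by
  obtain ⟨ψ, hψ_one, hψ_zero⟩ := exists_schwartzMap_cutoff
  refine ⟨𝓕⁻ ψ, fun ω t hω => ?_⟩
  rw [SchwartzMap.fourierInv_coe, tsum_fourierInv_mul_fourierChar, tsum_eq_single 0]
  · simp [hψ_one ω hω]
  · intro n hn
    have hn : (1 : ℝ) ≤ |(n : ℝ)| := mod_cast Int.one_le_abs hn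
    have hfar : |(n : ℝ)| - |ω| ≤ |ω + n| := by
      simpa [add_comm] using abs_sub_abs_le_abs_sub (n : ℝ) (-ω)
    rw [hψ_zero _ (by linarith), mul_zero]

theorem exists_sampling_formula : ∃ κ : 𝓢(ℝ, ℂ), ∀ Φ : ℝ → ℂ, Integrable Φ → ∀ Q : ℝ,
    (∀ ξ, 1 / 4 < |Q * ξ| → Φ ξ = 0) → ∀ r t : ℝ,
      𝓕⁻ Φ (Q * t + r) = ∑' y : ℤ, κ (t - y) * 𝓕⁻ Φ (Q * y + r) := by
  obtain ⟨κ, hκ⟩ := exists_sampling_kernel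
  refine ⟨κ, fun Φ hΦ Q hQ r t => ?_⟩
  rw [tsum_mul_fourierInv hΦ (summable_norm_sub_int κ t), fourierInv_eq_integral_mul]
  refine integral_congr_ae (.of_forall fun ξ => ?_)
  by_cases hξ : |Q * ξ| ≤ 1 / 4
  · have hsplit : ∀ τ : ℝ, (𝐞 (ξ * (Q * τ + r)) : ℂ) = 𝐞 (Q * ξ * τ) * 𝐞 (ξ * r) := fun τ => by
      rw [← Circle.coe_mul, ← AddChar.map_add_eq_mul]
      ring_nf
    simp only [hsplit, ← mul_assoc, tsum_mul_right, hκ _ t hξ]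
  · simp only [hQ ξ (not_le.mp hξ), mul_zero]

theorem hasCompactSupport_of_forall_le_abs {E : Type*} [Zero E] {φ : ℝ → E} {R : ℝ}
    (hφ : ∀ ξ, R ≤ |ξ| → φ ξ = 0) : HasCompactSupport φ :=
  .intro (isCompact_Icc (a := -R) (b := R)) fun ξ hξ =>
    hφ ξ (le_of_not_ge fun h => hξ (abs_le.mp h))

/-! ### Band-limited sequences along residue classes -/

/-- `F` is the restriction to `ℤ` of the inverse Fourier transform of an integrable function on `ℝ`
which vanishes off `[-δ, δ]`. -/
def IsBandLimited (F : ℤ → ℂ) (δ : ℝ) : Prop :=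
  ∃ Φ : ℝ → ℂ, Integrable Φ ∧ (∀ ξ, δ < |ξ| → Φ ξ = 0) ∧ ∀ n : ℤ, F n = 𝓕⁻ Φ n

theorem IsBandLimited.mono {F : ℤ → ℂ} {δ ε : ℝ} (hF : IsBandLimited F δ) (hδε : δ ≤ ε) :
    IsBandLimited F ε := by
  obtain ⟨Φ, hΦ, hzero, hF⟩ := hF
  exact ⟨Φ, hΦ, fun ξ hξ => hzero ξ (hδε.trans_lt hξ), hF⟩

theorem IsBandLimited.exists_enorm_le_tsum_residueClass : ∃ k : ℤ → ℝ≥0∞, ∑' m, k m ≠ ∞ ∧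
    ∀ Q : ℕ, 0 < Q → ∀ F : ℤ → ℂ, IsBandLimited F (1 / (4 * Q)) → ∀ (r x : ℤ) (j : ℕ), j < Q →
      ‖F (Q * x + j + r)‖ₑ ≤ ∑' y : ℤ, k (x - y) * ‖F (Q * y + r)‖ₑ := by
  obtain ⟨κ, hκ⟩ := exists_sampling_formula
  obtain ⟨k, hk, hκk⟩ := exists_summable_majorant κ
  refine ⟨k, hk, fun Q hQ F ⟨Φ, hΦ, hΦ_zero, hF⟩ r x j hj => ?_⟩
  have hQ : (0 : ℝ) < Q := Nat.cast_pos.mpr hQ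
  have hsample := hκ Φ hΦ Q (fun ξ hξ => hΦ_zero ξ ?_) r (x + j / Q)
  · have hblock : F (Q * x + j + r) = 𝓕⁻ Φ (Q * (x + j / Q) + r) := by
      rw [hF]
      push_cast
      field_simp
    rw [hblock, hsample]
    refine enorm_tsum_le_tsum_enorm.trans (ENNReal.tsum_le_tsum fun y => ?_)
    rw [enorm_mul, hF (Q * y + r)]
    push_cast
    gcongr
    convert! hκk (x - y) (j / Q) (by positivity) ?_ using 3
    · push_cast
      ring
    · exact div_le_one_of_le₀ (Nat.cast_le.mpr hj.le) hQ.le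
  · rw [abs_mul, abs_of_pos hQ] at hξ
    rw [div_lt_iff₀ (by positivity)]
    linarith

theorem IsBandLimited.exists_weakType_enorm : ∃ C : ℝ≥0∞, C ≠ ∞ ∧
    ∀ Q : ℕ, 0 < Q → ∀ F : ℤ → ℂ, IsBandLimited F (1 / (4 * Q)) →
      ∀ (r : ℤ) (c : ℝ≥0∞) (S : Finset ℤ),
        (∀ x ∈ S, ∃ N : ℕ, 0 < N ∧ c * N ≤ ∑ n ∈ Finset.Icc 1 N, ‖F (Q * x + r + n)‖ₑ) →
          c * S.card ≤ C * ∑' x : ℤ, ‖F (Q * x + r)‖ₑ := by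
  obtain ⟨k, hk, hdom⟩ := IsBandLimited.exists_enorm_le_tsum_residueClass
  refine ⟨2 * ∑' m, k m, ENNReal.mul_ne_top ENNReal.ofNat_ne_top hk,
    fun Q hQ F hF r c S hS => ?_⟩
  rw [mul_assoc, ← tsum_tsum_sub_mul]
  simp only [add_right_comm _ r] at hS
  exact mul_card_le_two_mul_tsum_of_block_le (fun n => ‖F (n + r)‖ₑ) _ hQ (hdom Q hQ F hF r) c S hS

theorem finite_and_mul_ncard_le_of_forall_finset {α : Type*} {E : Set α} {l B : ℝ} (hl : 0 < l)
    (hE : ∀ S : Finset α, ↑S ⊆ E → l * S.card ≤ B) : E.Finite ∧ l * E.ncard ≤ B := by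
  have hfinite : E.Finite := by
    by_contra hinfinite
    obtain ⟨n, hn⟩ := exists_nat_gt (B / l)
    obtain ⟨S, hSE, rfl⟩ := Set.Infinite.exists_subset_card_eq hinfinite n
    exact (hE S hSE).not_gt ((div_lt_iff₀' hl).mp hn)
  refine ⟨hfinite, ?_⟩
  rw [Set.ncard_eq_toFinset_card E hfinite]
  exact hE _ hfinite.coe_toFinset.le

theorem IsBandLimited.exists_weakType : ∃ C : ℝ, 0 < C ∧
    ∀ Q : ℕ, 0 < Q → ∀ F : ℤ → ℂ, IsBandLimited F (1 / (4 * Q)) →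
      ∀ r : ℤ, (Summable fun x : ℤ => ‖F (Q * x + r)‖) → ∀ l : ℝ, 0 < l → ∀ E : Set ℤ,
        (∀ x ∈ E, ∃ N : ℕ, 0 < N ∧ l * N ≤ ∑ n ∈ Finset.Icc 1 N, ‖F (Q * x + r + n)‖) →
          E.Finite ∧ l * E.ncard ≤ C * ∑' x : ℤ, ‖F (Q * x + r)‖ := by
  obtain ⟨C, hC, hweak⟩ := IsBandLimited.exists_weakType_enorm
  refine ⟨C.toReal + 1, by positivity, fun Q hQ F hF r hsum l hl E hE =>
    finite_and_mul_ncard_le_of_forall_finset hl fun S hSE => ?_⟩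
  have hA : 0 ≤ ∑' x : ℤ, ‖F (Q * x + r)‖ := tsum_nonneg fun _ => norm_nonneg _
  have hS := hweak Q hQ F hF r (ENNReal.ofReal l) S fun x hx => by
    obtain ⟨N, hN, hlN⟩ := hE x (hSE hx)
    refine ⟨N, hN, ?_⟩
    simpa only [ENNReal.ofReal_mul hl.le, ENNReal.ofReal_natCast, ofReal_norm,
      ENNReal.ofReal_sum_of_nonneg fun _ _ => norm_nonneg _] using ENNReal.ofReal_le_ofReal hlN
  rw [← ENNReal.ofReal_toReal hC, ← ENNReal.ofReal_natCast S.card, ← ENNReal.ofReal_mul hl.le] at hS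
  simp only [← ofReal_norm] at hS
  rw [← ENNReal.ofReal_tsum_of_nonneg (fun _ => norm_nonneg _) hsum,
    ← ENNReal.ofReal_mul ENNReal.toReal_nonneg,
    ENNReal.ofReal_le_ofReal_iff (by positivity)] at hS
  linarith

/-! ### Frequency localization by `η_s` -/

theorem finvInt_eq_fourierInv {g Φ : ℝ → ℂ} (hg : Function.Periodic g 1)
    (hgΦ : ∀ ξ, |ξ| ≤ 1 / 2 → g ξ = Φ ξ) (hΦ : ∀ ξ, 1 / 2 ≤ |ξ| → Φ ξ = 0) (n : ℤ) :
    FinvInt g n = 𝓕⁻ Φ n := by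
  have hchar : ∀ ξ : ℝ, Complex.exp (2 * Real.pi * Complex.I * ξ * n) = 𝐞 (ξ * n) := fun ξ => by
    rw [Real.fourierChar_apply]
    push_cast
    ring_nf
  have hperiodic : Function.Periodic (fun ξ : ℝ => g ξ * (𝐞 (ξ * n) : ℂ)) 1 := fun ξ => by
    simp only [hg ξ, ← hchar, Complex.ofReal_add, Complex.ofReal_one]
    rw [← Complex.exp_periodic.int_mul n (2 * Real.pi * Complex.I * ξ * n)]
    ring_nf
  have hsupport : Function.support (fun ξ => 𝐞 (ξ * n) * Φ ξ) ⊆ Set.Ioc (-(1 / 2)) (1 / 2) :=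
    fun ξ hξ => by
      have hξ : |ξ| < 1 / 2 := not_le.mp fun h => hξ (by simp only [hΦ ξ h, mul_zero])
      obtain ⟨hlower, hupper⟩ := abs_lt.mp hξ
      exact ⟨hlower, hupper.le⟩
  calc FinvInt g n = ∫ ξ in (0 : ℝ)..0 + 1, g ξ * 𝐞 (ξ * n) := by
        simp only [FinvInt, hchar, zero_add]
    _ = ∫ ξ in (-(1 / 2) : ℝ)..-(1 / 2) + 1, g ξ * 𝐞 (ξ * n) :=
      hperiodic.intervalIntegral_add_eq 0 (-(1 / 2))
    _ = ∫ ξ in (-(1 / 2) : ℝ)..1 / 2, 𝐞 (ξ * n) * Φ ξ := by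
      norm_num only
      refine intervalIntegral.integral_congr fun ξ hξ => ?_
      rw [Set.uIcc_of_le (by norm_num)] at hξ
      rw [hgΦ ξ (abs_le.mpr hξ), mul_comm]
    _ = 𝓕⁻ Φ n := by
      rw [intervalIntegral.integral_eq_integral_of_support_subset hsupport,
        fourierInv_eq_integral_mul]

theorem etaPer_periodic (η : ℝ → ℝ) (s : ℕ) : Function.Periodic (etaPer η s) 1 := fun ξ => by
  rw [etaPer, ← (Equiv.addRight (1 : ℤ)).tsum_eq]
  simp [etaPer]

theorem etaPer_eq_of_abs_le_half {η : ℝ → ℝ} (hη : ∀ ξ, 1 / 2 ≤ |ξ| → η ξ = 0) (s : ℕ) {ξ : ℝ}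
    (hξ : |ξ| ≤ 1 / 2) : etaPer η s ξ = η (2 ^ (4 * s) * ξ) := by
  rw [etaPer, tsum_eq_single 0 fun k hk => hη _ ?_, Int.cast_zero, sub_zero]
  have hk : (1 : ℝ) ≤ |(k : ℝ)| := mod_cast Int.one_le_abs hk
  have hfar : 1 / 2 ≤ |ξ - k| := by
    linarith [abs_sub_abs_le_abs_sub (k : ℝ) ξ, abs_sub_comm ξ k]
  rw [abs_mul, abs_of_pos (by positivity)]
  exact hfar.trans (le_mul_of_one_le_left (abs_nonneg _) (one_le_pow₀ one_le_two))

theorem fhat_eq_tsum_fourierChar (f : ℤ → ℂ) (ξ : ℝ) :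
    fhat f ξ = ∑' n : ℤ, f n * 𝐞 (-(ξ * n)) := by
  refine tsum_congr fun n => ?_
  rw [Real.fourierChar_apply]
  push_cast
  ring_nf

theorem fhat_periodic (f : ℤ → ℂ) : Function.Periodic (fhat f) 1 := fun ξ => by
  refine tsum_congr fun n => ?_
  rw [← Complex.exp_periodic.int_mul n (-(2 * Real.pi * Complex.I * (ξ + 1 : ℝ) * n))]
  push_cast
  ring_nf

theorem continuous_fhat {f : ℤ → ℂ} (hf : Summable fun n => ‖f n‖) : Continuous (fhat f) := by
  simp only [funext (fhat_eq_tsum_fourierChar f)]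
  refine continuous_tsum (fun n => by fun_prop) hf fun n ξ => ?_
  rw [norm_mul, Circle.norm_coe, mul_one]

theorem fourierInv_mul_fhat {ψ : ℝ → ℂ} (hψ : Integrable ψ) {f : ℤ → ℂ}
    (hf : Summable fun n => ‖f n‖) (t : ℝ) :
    𝓕⁻ (fun ξ => ψ ξ * fhat f ξ) t = ∑' m : ℤ, f m * 𝓕⁻ ψ (t - m) := by
  rw [tsum_mul_fourierInv hψ hf, fourierInv_eq_integral_mul]
  refine integral_congr_ae (.of_forall fun ξ => ?_)
  have hsplit : ∀ m : ℤ, f m * 𝐞 (ξ * (t - m)) = f m * 𝐞 (-(ξ * m)) * 𝐞 (ξ * t) := fun m => by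
    rw [mul_assoc, ← Circle.coe_mul, ← AddChar.map_add_eq_mul]
    ring_nf
  simp only [hsplit, tsum_mul_right, fhat_eq_tsum_fourierChar]
  ring

theorem summable_norm_fourierInv_mul_fhat (ψ : 𝓢(ℝ, ℂ)) {f : ℤ → ℂ}
    (hf : Summable fun n => ‖f n‖) :
    Summable fun n : ℤ => ‖𝓕⁻ (fun ξ => ψ ξ * fhat f ξ) (n : ℝ)‖ := by
  obtain ⟨k, hk, hψk⟩ := exists_summable_majorant (𝓕⁻ ψ : 𝓢(ℝ, ℂ))
  rw [← tsum_enorm_ne_top_iff_summable_norm] at hf ⊢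
  refine ne_top_of_le_ne_top (ENNReal.mul_ne_top hk hf) ?_
  rw [← tsum_tsum_sub_mul]
  refine ENNReal.tsum_le_tsum fun n => ?_
  rw [fourierInv_mul_fhat ψ.integrable (tsum_enorm_ne_top_iff_summable_norm.mp hf)]
  refine enorm_tsum_le_tsum_enorm.trans (ENNReal.tsum_le_tsum fun m => ?_)
  rw [enorm_mul, mul_comm]
  gcongr
  simpa [SchwartzMap.fourierInv_coe] using hψk (n - m) 0 le_rfl zero_le_one

theorem exists_schwartzMap_dilate {η : ℝ → ℝ} (hη : ContDiff ℝ (⊤ : ℕ∞) η)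
    (hη_zero : ∀ ξ, 1 / 2 ≤ |ξ| → η ξ = 0) {c : ℝ} (hc : 0 < c) :
    ∃ ψ : 𝓢(ℝ, ℂ), (∀ ξ, ψ ξ = η (c * ξ)) ∧ ∀ ξ, 1 / (2 * c) ≤ |ξ| → ψ ξ = 0 := by
  have hzero : ∀ ξ : ℝ, 1 / (2 * c) ≤ |ξ| → (η (c * ξ) : ℂ) = 0 := fun ξ hξ => by
    refine Complex.ofReal_eq_zero.mpr (hη_zero _ ?_)
    rw [abs_mul, abs_of_pos hc]
    rw [div_le_iff₀ (by positivity)] at hξ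
    linarith
  refine ⟨(hasCompactSupport_of_forall_le_abs hzero).toSchwartzMap
    (Complex.ofRealCLM.contDiff.comp (hη.comp (contDiff_const.mul contDiff_id))),
    fun _ => rfl, hzero⟩

theorem exists_finvInt_etaPer_mul_fhat_eq {η : ℝ → ℝ} (hη : ContDiff ℝ (⊤ : ℕ∞) η)
    (hη_zero : ∀ ξ, 1 / 2 ≤ |ξ| → η ξ = 0) (s : ℕ) (f : ℤ → ℂ) :
    ∃ ψ : 𝓢(ℝ, ℂ), (∀ ξ, 1 / (2 * 2 ^ (4 * s)) ≤ |ξ| → ψ ξ = 0) ∧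
      ∀ n : ℤ, FinvInt (fun ξ => (etaPer η s ξ : ℂ) * fhat f ξ) n =
        𝓕⁻ (fun ξ => ψ ξ * fhat f ξ) (n : ℝ) := by
  obtain ⟨ψ, hψ, hψ_zero⟩ :=
    exists_schwartzMap_dilate hη hη_zero (c := 2 ^ (4 * s)) (by positivity)
  have hperiodic : Function.Periodic (fun ξ => (etaPer η s ξ : ℂ) * fhat f ξ) 1 := fun ξ => by
    simp only [etaPer_periodic η s ξ, fhat_periodic f ξ]
  refine ⟨ψ, hψ_zero, finvInt_eq_fourierInv hperiodic (fun ξ hξ => ?_) fun ξ hξ => ?_⟩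
  · rw [etaPer_eq_of_abs_le_half hη_zero s hξ, hψ]
  · have hle : (1 : ℝ) / (2 * 2 ^ (4 * s)) ≤ 1 / 2 := by
      gcongr
      exact le_mul_of_one_le_right zero_le_two (one_le_pow₀ one_le_two)
    rw [hψ_zero ξ (hle.trans hξ), zero_mul]

theorem isBandLimited_finvInt_etaPer_mul_fhat {η : ℝ → ℝ} (hη : ContDiff ℝ (⊤ : ℕ∞) η)
    (hη_zero : ∀ ξ, 1 / 2 ≤ |ξ| → η ξ = 0) (s : ℕ) {f : ℤ → ℂ} (hf : Summable fun n => ‖f n‖) :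
    IsBandLimited (FinvInt fun ξ => (etaPer η s ξ : ℂ) * fhat f ξ) (1 / (2 * 2 ^ (4 * s))) := by
  obtain ⟨ψ, hψ_zero, hF⟩ := exists_finvInt_etaPer_mul_fhat_eq hη hη_zero s f
  have hzero : ∀ ξ : ℝ, 1 / (2 * 2 ^ (4 * s)) ≤ |ξ| → ψ ξ * fhat f ξ = 0 := fun ξ hξ => by
    rw [hψ_zero ξ hξ, zero_mul]
  have hcontinuous : Continuous fun ξ => ψ ξ * fhat f ξ := ψ.continuous.mul (continuous_fhat hf)
  exact ⟨_, hcontinuous.integrable_of_hasCompactSupport (hasCompactSupport_of_forall_le_abs hzero),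
    fun ξ hξ => hzero ξ hξ.le, hF⟩

theorem summable_norm_finvInt_etaPer_mul_fhat {η : ℝ → ℝ} (hη : ContDiff ℝ (⊤ : ℕ∞) η)
    (hη_zero : ∀ ξ, 1 / 2 ≤ |ξ| → η ξ = 0) (s : ℕ) {f : ℤ → ℂ} (hf : Summable fun n => ‖f n‖) :
    Summable fun n => ‖FinvInt (fun ξ => (etaPer η s ξ : ℂ) * fhat f ξ) n‖ := by
  obtain ⟨ψ, -, hF⟩ := exists_finvInt_etaPer_mul_fhat_eq hη hη_zero s f
  simpa only [hF] using summable_norm_fourierInv_mul_fhat ψ hf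

theorem injective_natCast_mul_add {Q : ℕ} (hQ : 0 < Q) (r : ℤ) :
    Function.Injective fun x : ℤ => (Q : ℤ) * x + r :=
  (add_left_injective r).comp (mul_right_injective₀ (Nat.cast_ne_zero.mpr hQ.ne'))

theorem two_mul_le_two_pow_four_mul {s Q : ℕ} (hs : 1 ≤ s) (hQ : Q ≤ 2 ^ (2 * s)) :
    2 * Q ≤ 2 ^ (4 * s) :=
  calc 2 * Q ≤ 2 ^ 1 * 2 ^ (2 * s) := by gcongr; norm_num
    _ = 2 ^ (1 + 2 * s) := (pow_add ..).symm
    _ ≤ 2 ^ (4 * s) := Nat.pow_le_pow_right two_pos (by lia)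

theorem stmt_11_general {b : ℝ} (hb : 0 < b) : ∃ C : ℝ, 0 < C ∧
    ∀ η : ℝ → ℝ, ContDiff ℝ (⊤ : ℕ∞) η → (∀ ξ, 1 / 2 ≤ |ξ| → η ξ = 0) →
      ∀ s Q : ℕ, 0 < Q → 2 * Q ≤ 2 ^ (4 * s) → ∀ r : ℤ, ∀ β : ℝ, b ≤ β → β ≤ 1 →
        ∀ f : ℤ → ℂ, (Summable fun n => ‖f n‖) → ∀ l : ℝ, 0 < l → ∀ E : Set ℤ,
          (∀ x ∈ E, ∃ N : ℕ,
            l < ‖Mop β N (FinvInt fun ξ => (etaPer η s ξ : ℂ) * fhat f ξ) (Q * x + r)‖) →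
          E.Finite ∧ l * E.ncard ≤
            C * ∑' x : ℤ, ‖FinvInt (fun ξ => (etaPer η s ξ : ℂ) * fhat f ξ) (Q * x + r)‖ := by
  obtain ⟨C, hC, hweak⟩ := IsBandLimited.exists_weakType
  refine ⟨C / b, by positivity, fun η hη hη_zero s Q hQ hQs r β hbβ hβ f hf l hl E hE => ?_⟩
  have hwidth : (1 : ℝ) / (2 * 2 ^ (4 * s)) ≤ 1 / (4 * Q) := by
    have : (2 : ℝ) * Q ≤ 2 ^ (4 * s) := mod_cast hQs
    exact one_div_le_one_div_of_le (by positivity) (by linarith)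
  have hband := (isBandLimited_finvInt_etaPer_mul_fhat hη hη_zero s hf).mono hwidth
  have hsum := (summable_norm_finvInt_etaPer_mul_fhat hη hη_zero s hf).comp_injective
    (injective_natCast_mul_add hQ r)
  have hβ₀ : 0 < β := hb.trans_le hbβ
  rw [div_mul_eq_mul_div, le_div_iff₀' hb, ← mul_assoc]
  refine hweak Q hQ _ hband r hsum (b * l) (mul_pos hb hl) E fun x hx => ?_
  obtain ⟨N, hN⟩ := hE x hx
  refine ⟨N, N.pos_of_ne_zero fun hzero => hN.not_ge ?_,
    le_trans ?_ (mul_norm_Mop_le hβ₀ hβ N _ _)⟩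
  · simpa [hzero, Mop] using hl.le
  · gcongr

/-- Weak `ℓ¹` bound along residue classes for the maximal function of `M_{2^n}^β` applied
to `ℱ⁻¹(η_s f̂)`. -/
theorem stmt_11 (η : ℝ → ℝ) (hη : IsEta η) :
    ∃ C : ℝ, 0 < C ∧
      ∀ (s : ℕ), 1 ≤ s → ∀ (Q : ℕ), 1 ≤ Q → Q ≤ 2 ^ (2 * s) →
        ∀ (r : ℕ), 1 ≤ r → r ≤ Q →
          ∀ (β : ℝ), 1 / 2 ≤ β → β ≤ 1 →
            ∀ (f : ℤ → ℂ), (Function.support f).Finite →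
              ∀ l : ℝ, 0 < l →
                {x : ℤ | ∃ n : ℕ, l < ‖Mop β (2 ^ n)
                    (FinvInt (fun ξ => (etaPer η s ξ : ℂ) * fhat f ξ))
                    ((Q : ℤ) * x + r)‖}.Finite ∧
                l * (({x : ℤ | ∃ n : ℕ, l < ‖Mop β (2 ^ n)
                    (FinvInt (fun ξ => (etaPer η s ξ : ℂ) * fhat f ξ))
                    ((Q : ℤ) * x + r)‖}.ncard : ℝ)) ≤
                  C * ∑' x : ℤ,
                    ‖FinvInt (fun ξ => (etaPer η s ξ : ℂ) * fhat f ξ) ((Q : ℤ) * x + r)‖ := by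
  obtain ⟨C, hC, hweak⟩ := stmt_11_general (b := 1 / 2) (by norm_num)
  exact ⟨C, hC, fun s hs Q hQ hQs r _ _ β hβ hβ' f hf l hl => hweak η hη.1 hη.2.2.2.1 s Q hQ
    (two_mul_le_two_pow_four_mul hs hQs) r β hβ hβ' f
    (summable_of_hasFiniteSupport (hf.subset fun _ => norm_ne_zero_iff.mp)) l hl _
    fun _ ⟨n, hn⟩ => ⟨2 ^ n, hn⟩⟩
end
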